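/- arXiv:1411.7996 — 2 statements merged into one kernel-verified Lean document; each statement's English description precedes it below -/
import Mathlib

section
/- Let n ≥ 3 be an integer and set γ = n/(n−2). For every c ≥ 0 there is a constant A₂ > 0, depending only on n and c, such that: for every x ∈ ℝⁿ, every 0 < r < R ≤ 1 and every smooth nonnegative function f on an open set containing the closed ball B̄(x,R) satisfying −Δf ≤ c·f pointwise on B(x,R), one has (∫_{B(x,r)} f^{2γ} dx)^{1/γ} ≤ (A₂/(R−r)²) ∫_{B(x,R)} f² dx. -/
/-!
Let `φ` be a cutoff equal to `1` on `B(x,r)`, supported in `B(x,R)`, with `|∇φ| ≤ K/(R-r)`.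
Integrating the identity `|∇(φf)|² = div(φ² f ∇f) + φ² f (-Δf) + |∇φ|² f²` and using
`-Δf ≤ c f` together with `f ≥ 0` gives the Caccioppoli estimate
`∫ |∇(φf)|² ≤ ∫ (c φ² + |∇φ|²) f² ≤ (c + K²)/(R-r)² ∫_{B(x,R)} f²` (lemma `caccioppoli`), where
`R - r ≤ 1` absorbs `c`. The homogeneous Sobolev inequality `‖u‖²_{2n/(n-2)} ≤ C ‖∇u‖²_2`
(`sobolev_real`) applied to `u = φf` then bounds the left-hand side, since `u = f` on `B(x,r)`.

As `f` is only smooth near the closed ball, it is first multiplied by a bump function that is `1`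
on the ball containing the support of `φ` (`exists_contDiff_eq_on_ball`). The constant `K` in
`exists_cutoff` does not depend on the balls, so the final constant depends on `n` and `c` only.
-/

open MeasureTheory Metric

/-- The Euclidean (analyst's) Laplacian `Δf = ∑ i ∂²f/∂xᵢ²`. -/
noncomputable def lap {n : ℕ} (f : EuclideanSpace ℝ (Fin n) → ℝ)
    (x : EuclideanSpace ℝ (Fin n)) : ℝ :=
  ∑ i : Fin n,
    fderiv ℝ (fun y => fderiv ℝ f y (EuclideanSpace.single i 1)) x (EuclideanSpace.single i 1)

theorem norm_fderiv_sq {n : ℕ} (L : EuclideanSpace ℝ (Fin n) →L[ℝ] ℝ) :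
    ‖L‖ ^ 2 = ∑ i, (L (EuclideanSpace.single i 1)) ^ 2 := by
  have h := (EuclideanSpace.basisFun (Fin n) ℝ).norm_dual L
  simpa using h

/-- The divergence theorem for compactly supported functions, one coordinate at a time. -/
theorem integral_fderiv_apply_eq_zero {n : ℕ} {G : EuclideanSpace ℝ (Fin n) → ℝ}
    (hG : ContDiff ℝ 1 G) (hc : HasCompactSupport G) (v : EuclideanSpace ℝ (Fin n)) :
    ∫ y, fderiv ℝ G y v = 0 := by
  have hcont : Continuous fun y => fderiv ℝ G y v :=
    (hG.continuous_fderiv one_ne_zero).clm_apply continuous_const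
  have hsupp : HasCompactSupport fun y => fderiv ℝ G y v := hc.fderiv_apply ℝ v
  have h := integral_mul_fderiv_eq_neg_fderiv_mul_of_integrable
    (μ := (volume : Measure (EuclideanSpace ℝ (Fin n)))) (𝕜 := ℝ)
    (f := fun _ => (1 : ℝ)) (g := G) (v := v)
    (by simp) (by simpa using hcont.integrable_of_hasCompactSupport hsupp)
    (by simpa using hG.continuous.integrable_of_hasCompactSupport hc)
    (fun x _ => by fun_prop) (fun x _ => hG.differentiable one_ne_zero x)
  simpa using h

theorem hasCompactSupport_norm_fderiv_sq {n : ℕ} {g : EuclideanSpace ℝ (Fin n) → ℝ}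
    (hg : HasCompactSupport g) : HasCompactSupport fun y => ‖fderiv ℝ g y‖ ^ 2 := by
  refine (hg.fderiv ℝ).mono fun y hy => ?_
  contrapose! hy
  simp_all

/-- Caccioppoli's inequality. The field `φ² F ∇F` is compactly supported, so its divergence
integrates to zero, while `|∇(φF)|² - div(φ² F ∇F) = φ² F (-ΔF) + |∇φ|² F²` pointwise. -/
theorem caccioppoli {n : ℕ} {F φ : EuclideanSpace ℝ (Fin n) → ℝ} {c : ℝ}
    (hF : ContDiff ℝ 2 F) (hφ : ContDiff ℝ 1 φ) (hφc : HasCompactSupport φ)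
    (hF0 : ∀ y, φ y ≠ 0 → 0 ≤ F y) (hsub : ∀ y, φ y ≠ 0 → -lap F y ≤ c * F y) :
    ∫ y, ‖fderiv ℝ (fun z => φ z * F z) y‖ ^ 2 ≤
      ∫ y, (c * φ y ^ 2 + ‖fderiv ℝ φ y‖ ^ 2) * F y ^ 2 := by
  have hF1 : ContDiff ℝ 1 F := hF.of_le one_le_two
  have hdF : ∀ v, ContDiff ℝ 1 fun y => fderiv ℝ F y v := fun v =>
    (hF.fderiv_right (m := 1) (by norm_num)).clm_apply contDiff_const
  set e : Fin n → EuclideanSpace ℝ (Fin n) := fun i => EuclideanSpace.single i 1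
  set G : Fin n → EuclideanSpace ℝ (Fin n) → ℝ :=
    fun i y => φ y ^ 2 * F y * fderiv ℝ F y (e i)
  have hG : ∀ i, ContDiff ℝ 1 (G i) := fun i => ((hφ.pow 2).mul hF1).mul (hdF _)
  have hGc : ∀ i, HasCompactSupport (G i) := fun i => by
    refine hφc.mono fun y hy => ?_
    contrapose! hy
    simp_all [G]
  have hdGint : ∀ i, Integrable fun y => fderiv ℝ (G i) y (e i) := fun i =>
    (((hG i).continuous_fderiv one_ne_zero).clm_apply
      continuous_const).integrable_of_hasCompactSupport ((hGc i).fderiv_apply ℝ (e i))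
  have hu : ContDiff ℝ 1 fun z => φ z * F z := hφ.mul hF1
  have huc : HasCompactSupport fun z => φ z * F z := hφc.mul_right
  have hint1 : Integrable fun y => ‖fderiv ℝ (fun z => φ z * F z) y‖ ^ 2 := by
    refine ((hu.continuous_fderiv one_ne_zero).norm.pow 2).integrable_of_hasCompactSupport ?_
    exact hasCompactSupport_norm_fderiv_sq huc
  have hint2 : Integrable fun y => (c * φ y ^ 2 + ‖fderiv ℝ φ y‖ ^ 2) * F y ^ 2 := by
    refine Continuous.integrable_of_hasCompactSupport ?_ ?_
    · have h1 := hφ.continuous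
      have h2 := hF.continuous
      have h3 := hφ.continuous_fderiv one_ne_zero
      fun_prop
    · refine HasCompactSupport.mul_right (HasCompactSupport.add ?_ ?_)
      · exact hφc.comp_left (g := fun t => c * t ^ 2) (by simp)
      · exact hasCompactSupport_norm_fderiv_sq hφc
  -- `∑ i, ∂ᵢ(G i)` is the divergence of `φ² F ∇F`.
  have hkey : ∀ y, ‖fderiv ℝ (fun z => φ z * F z) y‖ ^ 2 - ∑ i, fderiv ℝ (G i) y (e i) =
      φ y ^ 2 * F y * (-lap F y) + ‖fderiv ℝ φ y‖ ^ 2 * F y ^ 2 := by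
    intro y
    have hφd : HasFDerivAt φ (fderiv ℝ φ y) y := (hφ.differentiable one_ne_zero y).hasFDerivAt
    have hFd : HasFDerivAt F (fderiv ℝ F y) y := (hF1.differentiable one_ne_zero y).hasFDerivAt
    have hud := (hφd.mul hFd).fderiv
    have hGd : ∀ i, fderiv ℝ (G i) y (e i) =
        φ y ^ 2 * F y * fderiv ℝ (fun z => fderiv ℝ F z (e i)) y (e i) +
        (2 * φ y * fderiv ℝ φ y (e i) * F y + φ y ^ 2 * fderiv ℝ F y (e i))
          * fderiv ℝ F y (e i) := by
      intro i
      have h2 : HasFDerivAt (fun z => fderiv ℝ F z (e i)) _ y :=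
        ((hdF (e i)).differentiable one_ne_zero y).hasFDerivAt
      have h3 := (((hφd.pow 2).mul hFd).mul h2).fderiv
      have h4 := congrArg (fun L => L (e i)) h3
      simp only [G]
      refine h4.trans ?_
      simp
      ring
    rw [norm_fderiv_sq, norm_fderiv_sq, lap, Finset.sum_congr rfl fun i _ => hGd i]
    rw [← Finset.sum_neg_distrib, Finset.mul_sum, Finset.sum_mul, ← Finset.sum_add_distrib,
      ← Finset.sum_sub_distrib]
    refine Finset.sum_congr rfl fun i _ => ?_
    have : fderiv ℝ (fun z => φ z * F z) y = φ y • fderiv ℝ F y + F y • fderiv ℝ φ y := hud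
    rw [this]
    simp [e]
    ring
  have hsum : ∫ y, ∑ i, fderiv ℝ (G i) y (e i) = 0 := by
    rw [integral_finsetSum _ fun i _ => hdGint i]
    exact Finset.sum_eq_zero fun i _ => integral_fderiv_apply_eq_zero (hG i) (hGc i) _
  have hsumint : Integrable fun y => ∑ i, fderiv ℝ (G i) y (e i) :=
    integrable_finsetSum _ fun i _ => hdGint i
  calc ∫ y, ‖fderiv ℝ (fun z => φ z * F z) y‖ ^ 2
      = ∫ y, (‖fderiv ℝ (fun z => φ z * F z) y‖ ^ 2 - ∑ i, fderiv ℝ (G i) y (e i)) := by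
        rw [integral_sub hint1 hsumint, hsum, sub_zero]
    _ ≤ _ := by
        refine integral_mono (hint1.sub hsumint) hint2 fun y => ?_
        simp only [hkey]
        by_cases h : φ y = 0
        · simp [h]
        · nlinarith [mul_le_mul_of_nonneg_left (hsub y h)
            (mul_nonneg (sq_nonneg (φ y)) (hF0 y h))]

/-- The Gagliardo–Nirenberg–Sobolev inequality with exponents `2` and `2n/(n-2)`, squared and written
with Bochner integrals. -/
theorem sobolev_real (n : ℕ) (hn : 3 ≤ n) : ∃ C : ℝ, 0 ≤ C ∧
    ∀ u : EuclideanSpace ℝ (Fin n) → ℝ, ContDiff ℝ 1 u → HasCompactSupport u →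
      (∫ y, |u y| ^ (2 * ((n : ℝ) / (n - 2)))) ^ (((n : ℝ) / (n - 2))⁻¹)
        ≤ C * ∫ y, ‖fderiv ℝ u y‖ ^ 2 := by
  have hn' : (3 : ℝ) ≤ n := by exact_mod_cast hn
  set γ : ℝ := (n : ℝ) / (n - 2) with hγ
  have hγ0 : 0 < γ := div_pos (by linarith) (by linarith)
  set p' : NNReal := (2 * γ).toNNReal with hp'
  have hp'c : (p' : ℝ) = 2 * γ := Real.coe_toNNReal _ (by positivity)
  have hp'0 : p' ≠ 0 := by
    intro h; rw [h] at hp'c; simp at hp'c; exact hγ0.ne' hp'c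
  set K := eLpNormLESNormFDerivOfEqInnerConst
    (volume : Measure (EuclideanSpace ℝ (Fin n))) ((2 : NNReal) : ℝ)
  refine ⟨(K : ℝ) ^ 2, by positivity, fun u hu huc => ?_⟩
  have h := eLpNorm_le_eLpNorm_fderiv_of_eq_inner
    (volume : Measure (EuclideanSpace ℝ (Fin n))) hu huc (p := 2) (p' := p')
    (by norm_num) (by simp; omega) (by
      rw [hp'c, hγ]
      have : (n : ℝ) - 2 ≠ 0 := by linarith
      simp only [finrank_euclideanSpace, Fintype.card_fin, NNReal.coe_inv, NNReal.coe_ofNat]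
      field_simp)
  have hm1 : MemLp u (p' : ENNReal) volume := hu.continuous.memLp_of_hasCompactSupport huc
  have hm2 : MemLp (fderiv ℝ u) ((2 : NNReal) : ENNReal) volume :=
    (hu.continuous_fderiv one_ne_zero).memLp_of_hasCompactSupport (huc.fderiv ℝ)
  rw [hm1.eLpNorm_eq_integral_rpow_norm (by simpa using hp'0) (by simp),
    hm2.eLpNorm_eq_integral_rpow_norm (by simp) (by simp),
    ← ENNReal.ofReal_coe_nnreal (p := eLpNormLESNormFDerivOfEqInnerConst _ _),
    ← ENNReal.ofReal_mul (by positivity), ENNReal.ofReal_le_ofReal_iff (by positivity)] at h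
  simp only [ENNReal.coe_toReal, hp'c, Real.norm_eq_abs, NNReal.coe_ofNat] at h
  have hI : 0 ≤ ∫ y, |u y| ^ (2 * γ) := integral_nonneg fun y => by positivity
  have hJ : 0 ≤ ∫ y, ‖fderiv ℝ u y‖ ^ (2 : ℝ) := integral_nonneg fun y => by positivity
  have h2 := pow_le_pow_left₀ (by positivity) h 2
  rw [mul_pow, ← Real.rpow_natCast, ← Real.rpow_mul hI, ← Real.rpow_natCast (_ ^ (2:ℝ)⁻¹),
    ← Real.rpow_mul hJ] at h2
  have e1 : (2 * γ)⁻¹ * ((2 : ℕ) : ℝ) = γ⁻¹ := by push_cast; field_simp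
  have e2 : (2 : ℝ)⁻¹ * ((2 : ℕ) : ℝ) = 1 := by norm_num
  rw [e1, e2, Real.rpow_one] at h2
  simpa [K] using h2

theorem exists_bound_deriv_smoothTransition :
    ∃ M : ℝ, 0 ≤ M ∧ ∀ t, |deriv Real.smoothTransition t| ≤ M := by
  have hc : Continuous (deriv Real.smoothTransition) :=
    (Real.smoothTransition.contDiff (n := 1)).continuous_deriv le_rfl
  obtain ⟨M, hM⟩ := (isCompact_Icc (a := (0 : ℝ)) (b := 1)).exists_bound_of_continuousOn
    hc.continuousOn
  have hM0 : 0 ≤ M := (norm_nonneg _).trans (hM 0 (by simp))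
  refine ⟨M, hM0, fun t => ?_⟩
  by_cases h0 : t < 0
  · have : Real.smoothTransition =ᶠ[nhds t] fun _ => 0 := by
      filter_upwards [Iio_mem_nhds h0] with s hs
      exact Real.smoothTransition.zero_of_nonpos (le_of_lt hs)
    rw [this.deriv_eq]; simpa using hM0
  by_cases h1 : 1 < t
  · have : Real.smoothTransition =ᶠ[nhds t] fun _ => 1 := by
      filter_upwards [Ioi_mem_nhds h1] with s hs
      exact Real.smoothTransition.one_of_one_le (le_of_lt hs)
    rw [this.deriv_eq]; simpa using hM0
  exact hM t ⟨not_lt.1 h0, not_lt.1 h1⟩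

/-- Radial cutoffs between concentric balls with gradient `O(1/(s-r))`, uniformly in the balls:
`φ(y) = T((s² - |y-x|²)/(s² - r²))` with `T` the smooth transition function. -/
theorem exists_cutoff (n : ℕ) : ∃ K : ℝ, 0 ≤ K ∧
    ∀ (x : EuclideanSpace ℝ (Fin n)) (r s : ℝ), 0 < r → r < s →
      ∃ φ : EuclideanSpace ℝ (Fin n) → ℝ, ContDiff ℝ 1 φ ∧ HasCompactSupport φ ∧
        (∀ y, 0 ≤ φ y) ∧ (∀ y, φ y ≤ 1) ∧ (∀ y ∈ ball x r, φ y = 1) ∧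
        (∀ y, y ∉ ball x s → φ y = 0) ∧ (∀ y, y ∉ ball x s → fderiv ℝ φ y = 0) ∧
        ∀ y, ‖fderiv ℝ φ y‖ ≤ K / (s - r) := by
  obtain ⟨M, hM0, hM⟩ := exists_bound_deriv_smoothTransition
  refine ⟨2 * M, by positivity, fun x r s hr hrs => ?_⟩
  have hd : 0 < s ^ 2 - r ^ 2 := by nlinarith
  set ψ : EuclideanSpace ℝ (Fin n) → ℝ := fun y => (s ^ 2 - ‖y - x‖ ^ 2) / (s ^ 2 - r ^ 2)
  have hψd : ∀ y, HasFDerivAt ψ ((s ^ 2 - r ^ 2)⁻¹ • -((2 : ℝ) • (innerSL ℝ (y - x) : EuclideanSpace ℝ (Fin n) →L[ℝ] ℝ))) y := by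
    intro y
    have h1 : HasFDerivAt (fun z : EuclideanSpace ℝ (Fin n) => ‖z - x‖ ^ 2)
        ((2 : ℝ) • (innerSL ℝ (y - x) : EuclideanSpace ℝ (Fin n) →L[ℝ] ℝ)) y := by
      have := ((hasFDerivAt_id (𝕜 := ℝ) y).sub_const x).norm_sq
      refine this.congr_fderiv ?_
      ext v
      simp
    have h2 := (h1.const_sub (s ^ 2)).const_mul (s ^ 2 - r ^ 2)⁻¹
    refine h2.congr_of_eventuallyEq (Filter.Eventually.of_forall fun z => ?_)
    simp [ψ]; ring
  have hψc : ContDiff ℝ 1 ψ := by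
    have := (contDiff_norm_sq ℝ (n := 1)).comp
      ((contDiff_id (𝕜 := ℝ) (E := EuclideanSpace ℝ (Fin n)) (n := 1)).sub
        (contDiff_const (c := x)))
    exact (contDiff_const.sub this).div_const _
  set φ : EuclideanSpace ℝ (Fin n) → ℝ := fun y => Real.smoothTransition (ψ y)
  have hφc : ContDiff ℝ 1 φ := (Real.smoothTransition.contDiff (n := 1)).comp hψc
  have hφ0 : ∀ y, y ∉ ball x s → φ y = 0 := by
    intro y hy
    apply Real.smoothTransition.zero_of_nonpos
    rw [mem_ball, dist_eq_norm, not_lt] at hy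
    apply div_nonpos_of_nonpos_of_nonneg _ hd.le
    nlinarith
  have hfd : ∀ y, fderiv ℝ φ y = deriv Real.smoothTransition (ψ y) •
      ((s ^ 2 - r ^ 2)⁻¹ • -((2 : ℝ) • (innerSL ℝ (y - x) : EuclideanSpace ℝ (Fin n) →L[ℝ] ℝ))) := by
    intro y
    have h1 : HasDerivAt Real.smoothTransition (deriv Real.smoothTransition (ψ y)) (ψ y) :=
      ((Real.smoothTransition.contDiff (n := 1)).differentiable one_ne_zero _).hasDerivAt
    exact (h1.comp_hasFDerivAt y (hψd y)).fderiv
  have hfd0 : ∀ y, y ∉ ball x s → fderiv ℝ φ y = 0 := by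
    intro y hy
    -- The cutoff is nonnegative, so its zeros are minima.
    apply IsLocalMin.fderiv_eq_zero
    refine Filter.Eventually.of_forall fun z => ?_
    rw [hφ0 y hy]
    exact Real.smoothTransition.nonneg _
  refine ⟨φ, hφc, ?_, fun y => Real.smoothTransition.nonneg _,
    fun y => Real.smoothTransition.le_one _, ?_, hφ0, hfd0, ?_⟩
  · refine HasCompactSupport.of_support_subset_isCompact (isCompact_closedBall x s) fun y hy => ?_
    by_contra h
    exact hy (hφ0 y fun h' => h (ball_subset_closedBall h'))
  · intro y hy
    apply Real.smoothTransition.one_of_one_le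
    rw [mem_ball, dist_eq_norm] at hy
    rw [one_le_div hd]
    nlinarith [norm_nonneg (y - x)]
  · intro y
    by_cases hy : y ∈ ball x s
    · rw [mem_ball, dist_eq_norm] at hy
      rw [hfd, norm_smul, norm_smul, norm_neg, norm_smul, innerSL_apply_norm]
      simp only [Real.norm_eq_abs, abs_inv, abs_of_pos hd]
      norm_num
      have h3 : (s ^ 2 - r ^ 2)⁻¹ * (2 * ‖y - x‖) ≤ 2 / (s - r) := by
        have hsr : 0 < s - r := by linarith
        rw [inv_mul_eq_div, div_le_div_iff₀ hd hsr]
        nlinarith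
      calc _ ≤ M * (2 / (s - r)) := mul_le_mul (hM _) h3 (by positivity) hM0
        _ = _ := by ring
    · rw [hfd0 y hy]
      have hsr : 0 < s - r := by linarith
      simp only [norm_zero]
      positivity

/-- Multiplying by a bump function replaces `f`, smooth near `closedBall x R`, by a function smooth
on the whole space, unchanged on `ball x s` and between `0` and `f` on `ball x R`. -/
theorem exists_contDiff_eq_on_ball {n : ℕ} {x : EuclideanSpace ℝ (Fin n)} {s R : ℝ}
    (hs : 0 < s) (hsR : s < R) {f : EuclideanSpace ℝ (Fin n) → ℝ}
    {U : Set (EuclideanSpace ℝ (Fin n))} (hU : IsOpen U) (hball : closedBall x R ⊆ U)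
    (hf : ContDiffOn ℝ (⊤ : ℕ∞) f U) (hf0 : ∀ y ∈ U, 0 ≤ f y) :
    ∃ F : EuclideanSpace ℝ (Fin n) → ℝ, ContDiff ℝ 2 F ∧ (∀ y ∈ ball x s, F y = f y) ∧
      ∀ y ∈ ball x R, 0 ≤ F y ∧ F y ≤ f y := by
  let χ : ContDiffBump x := ⟨s, R, hs, hsR⟩
  refine ⟨fun y => χ y * f y, ?_, ?_, ?_⟩
  · rw [contDiff_iff_contDiffAt]
    intro y
    by_cases hy : y ∈ U
    · exact χ.contDiffAt.mul
        (((hf y hy).contDiffAt (hU.mem_nhds hy)).of_le (by exact_mod_cast le_top))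
    · have hy' : y ∉ tsupport χ := fun h => hy (hball (by simpa [χ.tsupport_eq] using h))
      have : (fun z => χ z * f z) =ᶠ[nhds y] fun _ => 0 := by
        filter_upwards [notMem_tsupport_iff_eventuallyEq.1 hy'] with z hz
        simp [hz]
      exact contDiffAt_const.congr_of_eventuallyEq this
  · intro y hy
    simp [χ.one_of_mem_closedBall (ball_subset_closedBall hy)]
  · intro y hy
    have h0 := hf0 y (hball (ball_subset_closedBall hy))
    exact ⟨mul_nonneg χ.nonneg h0, mul_le_of_le_one_left h0 χ.le_one⟩

theorem lap_congr_of_eqOn {n : ℕ} {F f : EuclideanSpace ℝ (Fin n) → ℝ}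
    {V : Set (EuclideanSpace ℝ (Fin n))} (hV : IsOpen V) (h : ∀ y ∈ V, F y = f y)
    {y : EuclideanSpace ℝ (Fin n)} (hy : y ∈ V) : lap F y = lap f y := by
  refine Finset.sum_congr rfl fun i _ => ?_
  have h1 : (fun z => fderiv ℝ F z (EuclideanSpace.single i 1)) =ᶠ[nhds y]
      fun z => fderiv ℝ f z (EuclideanSpace.single i 1) := by
    filter_upwards [hV.mem_nhds hy] with z hz
    have : F =ᶠ[nhds z] f := by filter_upwards [hV.mem_nhds hz] with w hw using h w hw
    rw [this.fderiv_eq]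
  rw [h1.fderiv_eq]

/-- One-step reverse-Hölder estimate for nonnegative subsolutions of `-Δf ≤ c f`:
with `γ = n/(n-2)`, `(∫_{B(x,r)} f^{2γ})^{1/γ} ≤ (A₂/(R-r)²) ∫_{B(x,R)} f²`,
where `A₂` depends only on `n` and `c`. -/
theorem reverse_holder_one_step (n : ℕ) (hn : 3 ≤ n) (c : ℝ) (hc : 0 ≤ c) :
    ∃ A₂ : ℝ, 0 < A₂ ∧
      ∀ (x : EuclideanSpace ℝ (Fin n)) (r R : ℝ), 0 < r → r < R → R ≤ 1 →
        ∀ (f : EuclideanSpace ℝ (Fin n) → ℝ) (U : Set (EuclideanSpace ℝ (Fin n))),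
          IsOpen U → closedBall x R ⊆ U → ContDiffOn ℝ (⊤ : ℕ∞) f U →
          (∀ y ∈ U, 0 ≤ f y) →
          (∀ y ∈ ball x R, -lap f y ≤ c * f y) →
          (∫ y in ball x r, f y ^ (2 * ((n : ℝ) / (n - 2)))) ^ (((n : ℝ) / (n - 2))⁻¹)
            ≤ A₂ / (R - r) ^ 2 * ∫ y in ball x R, f y ^ 2 := by
  obtain ⟨C, hC0, hC⟩ := sobolev_real n hn
  obtain ⟨K, hK0, hK⟩ := exists_cutoff n
  -- The summand `1` only serves to make the constant strictly positive.
  refine ⟨C * (c + 4 * K ^ 2) + 1, by positivity, ?_⟩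
  intro x r R hr hrR hR1 f U hU hball hf hf0 hsub
  obtain ⟨s, hs⟩ : ∃ s, s = (r + R) / 2 := ⟨_, rfl⟩
  have hrs : r < s := by linarith
  have hsR : s < R := by linarith
  have hRr : 0 < R - r := by linarith
  -- `F` is globally smooth and equals `f` on `B(x,s)`, which contains the support of `φ`.
  obtain ⟨F, hF, hFf, hFb⟩ := exists_contDiff_eq_on_ball (hr.trans hrs) hsR hU hball hf hf0
  obtain ⟨φ, hφ, hφc, hφ0, hφ1, hφr, hφs, hdφs, hdφ⟩ := hK x r s hr hrs
  have hsRball : ball x s ⊆ ball x R := ball_subset_ball hsR.le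
  have hmem : ∀ y, φ y ≠ 0 → y ∈ ball x s := fun y hy => by
    by_contra h; exact hy (hφs y h)
  have hu : ContDiff ℝ 1 fun y => φ y * F y := hφ.mul (hF.of_le one_le_two)
  have huc : HasCompactSupport fun y => φ y * F y := hφc.mul_right
  have hcacc := caccioppoli (c := c) hF hφ hφc (fun y hy => (hFb y (hsRball (hmem y hy))).1)
    (fun y hy => by
      rw [lap_congr_of_eqOn isOpen_ball hFf (hmem y hy), hFf y (hmem y hy)]
      exact hsub y (hsRball (hmem y hy)))
  have hsob := hC _ hu huc
  have hn' : (3 : ℝ) ≤ n := by exact_mod_cast hn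
  set γ : ℝ := (n : ℝ) / (n - 2) with hγ
  have hγ0 : 0 < γ := div_pos (by linarith) (by linarith)
  have hupint : Integrable fun y => |φ y * F y| ^ (2 * γ) := by
    refine Continuous.integrable_of_hasCompactSupport
      (hu.continuous.abs.rpow_const fun y => Or.inr (by positivity)) (huc.mono fun y hy => ?_)
    contrapose! hy
    have h0 : φ y * F y = 0 := Function.notMem_support.1 hy
    rw [Function.notMem_support, h0, abs_zero, Real.zero_rpow (by positivity)]
  have hleft : ∫ y in ball x r, f y ^ (2 * γ) ≤ ∫ y, |φ y * F y| ^ (2 * γ) := by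
    calc ∫ y in ball x r, f y ^ (2 * γ) = ∫ y in ball x r, |φ y * F y| ^ (2 * γ) := by
          refine setIntegral_congr_fun measurableSet_ball fun y hy => ?_
          have hyR : y ∈ ball x R := ball_subset_ball hrR.le hy
          simp only [hφr y hy, hFf y (ball_subset_ball hrs.le hy), one_mul,
            abs_of_nonneg (hf0 y (hball (ball_subset_closedBall hyR)))]
      _ ≤ _ := setIntegral_le_integral hupint (Filter.Eventually.of_forall fun y => by positivity)
  have hleft0 : 0 ≤ ∫ y in ball x r, f y ^ (2 * γ) :=
    setIntegral_nonneg measurableSet_ball fun y hy => Real.rpow_nonneg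
      (hf0 y (hball (ball_subset_closedBall (ball_subset_ball hrR.le hy)))) _
  have hfint : IntegrableOn (fun y => f y ^ 2) (ball x R) :=
    (((hf.continuousOn.mono hball).pow 2).integrableOn_compact
      (isCompact_closedBall x R)).mono_set ball_subset_closedBall
  have hright : ∫ y, (c * φ y ^ 2 + ‖fderiv ℝ φ y‖ ^ 2) * F y ^ 2 ≤
      (c + 4 * K ^ 2) / (R - r) ^ 2 * ∫ y in ball x R, f y ^ 2 := by
    rw [← setIntegral_eq_integral_of_forall_compl_eq_zero (s := ball x R) fun y hy => by
      have hy' : y ∉ ball x s := fun h => hy (hsRball h)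
      simp [hφs y hy', hdφs y hy'], ← integral_const_mul]
    refine integral_mono_of_nonneg (Filter.Eventually.of_forall fun y => by positivity)
      (hfint.const_mul _) ?_
    filter_upwards [ae_restrict_mem measurableSet_ball] with y hy
    have hcoef : c * φ y ^ 2 + ‖fderiv ℝ φ y‖ ^ 2 ≤ (c + 4 * K ^ 2) / (R - r) ^ 2 := by
      have h1 : φ y ^ 2 ≤ 1 := pow_le_one₀ (hφ0 y) (hφ1 y)
      have h2 : ‖fderiv ℝ φ y‖ ^ 2 ≤ (K / (s - r)) ^ 2 :=
        pow_le_pow_left₀ (norm_nonneg _) (hdφ y) 2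
      have h3 : K / (s - r) = 2 * K / (R - r) := by
        have h5 : s - r = (R - r) / 2 := by rw [hs]; ring
        rw [h5]
        field_simp
      -- This is the only use of `R ≤ 1`: it gives `(R - r)² ≤ 1`.
      have h4 : c ≤ c / (R - r) ^ 2 :=
        le_div_self hc (by positivity) (pow_le_one₀ hRr.le (by linarith))
      calc c * φ y ^ 2 + ‖fderiv ℝ φ y‖ ^ 2 ≤ c * 1 + (2 * K / (R - r)) ^ 2 := by
            rw [← h3]; gcongr
        _ ≤ c / (R - r) ^ 2 + (2 * K / (R - r)) ^ 2 := by linarith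
        _ = _ := by rw [div_pow]; ring
    have hFsq : F y ^ 2 ≤ f y ^ 2 := pow_le_pow_left₀ (hFb y hy).1 (hFb y hy).2 2
    exact mul_le_mul hcoef hFsq (sq_nonneg _) (by positivity)
  have hI0 : 0 ≤ ∫ y in ball x R, f y ^ 2 := integral_nonneg fun y => sq_nonneg _
  calc (∫ y in ball x r, f y ^ (2 * γ)) ^ γ⁻¹
      ≤ (∫ y, |φ y * F y| ^ (2 * γ)) ^ γ⁻¹ :=
        Real.rpow_le_rpow hleft0 hleft (inv_nonneg.2 hγ0.le)
    _ ≤ C * ∫ y, ‖fderiv ℝ (fun z => φ z * F z) y‖ ^ 2 := hsob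
    _ ≤ C * ((c + 4 * K ^ 2) / (R - r) ^ 2 * ∫ y in ball x R, f y ^ 2) :=
        mul_le_mul_of_nonneg_left (hcacc.trans hright) hC0
    _ = C * (c + 4 * K ^ 2) / (R - r) ^ 2 * ∫ y in ball x R, f y ^ 2 := by ring
    _ ≤ _ := by gcongr; linarith
end

section
/- Let Ω ⊆ ℝⁿ be open, φ : ℝ → ℝ continuously differentiable, c ∈ ℝ, and let u : Ω → ℝ be smooth with a ≤ u ≤ b on Ω for some reals a ≤ b, satisfying the equation −Δu = c·φ(u) pointwise on Ω. Set c₁ = max(0, sup_{t∈[a,b]} c·φ′(t)). Then for every ε > 0 the function f_ε = (‖∇u‖² + ε²)^{1/2} satisfies −Δf_ε ≤ c₁·f_ε pointwise on Ω; consequently, −Δ‖∇u‖ ≤ c₁·‖∇u‖ holds in the distributional sense on Ω. -/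
/-!
Write `wᵢ = ∂ᵢu` and `f = f_ε = (∑ wᵢ² + ε²)^{1/2}`. Differentiating twice,
`f Δf = ∑ᵢⱼ (∂ⱼwᵢ)² + ∑ᵢ wᵢ Δwᵢ - f⁻² ∑ⱼ (∑ᵢ wᵢ ∂ⱼwᵢ)²` (`lap_sqrt_sum_sq`). By
Cauchy–Schwarz, which is the Kato inequality here, the subtracted term is at most `∑ᵢⱼ (∂ⱼwᵢ)²`, so
`f Δf ≥ ∑ᵢ wᵢ Δwᵢ` (`sum_mul_lap_le_sqrt_mul_lap`). Partial derivatives commute, hence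
`Δwᵢ = ∂ᵢΔu = -c φ'(u) wᵢ` (`lap_partial_eq`), and `f Δf ≥ -c φ'(u) |∇u|² ≥ -c₁ f²`.

For the distributional inequality, integrate by parts twice against a test function `ψ`
(`integral_mul_lap`): with `A = -Δψ - c₁ψ` this gives `∫ f_ε A ≤ 0`. Since
`| |∇u| - f_ε | ≤ ε`, one gets `∫ |∇u| A ≤ ε ∫ |A|` for all `ε > 0`, so `∫ |∇u| A ≤ 0`.
-/

open MeasureTheory

/-! ### Partial derivatives -/

/-- The partial derivative `∂ᵢ f`. -/
noncomputable def pd {n : ℕ} (i : Fin n) (f : EuclideanSpace ℝ (Fin n) → ℝ)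
    (x : EuclideanSpace ℝ (Fin n)) : ℝ :=
  fderiv ℝ f x (EuclideanSpace.single i 1)

lemma lap_eq_sum_pd {n : ℕ} (f : EuclideanSpace ℝ (Fin n) → ℝ) (x : EuclideanSpace ℝ (Fin n)) :
    lap f x = ∑ i, pd i (pd i f) x := rfl

lemma contDiffAt_pd {n : ℕ} (i : Fin n) {f : EuclideanSpace ℝ (Fin n) → ℝ}
    {x : EuclideanSpace ℝ (Fin n)} (hf : ContDiffAt ℝ (⊤ : ℕ∞) f x) :
    ContDiffAt ℝ (⊤ : ℕ∞) (pd i f) x :=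
  (hf.fderiv_right (m := (⊤ : ℕ∞)) (by exact_mod_cast le_top)).clm_apply contDiffAt_const

lemma ContDiffAt.diffAt_top {n : ℕ} {f : EuclideanSpace ℝ (Fin n) → ℝ}
    {x : EuclideanSpace ℝ (Fin n)} (hf : ContDiffAt ℝ (⊤ : ℕ∞) f x) : DifferentiableAt ℝ f x :=
  hf.differentiableAt (by simp)

lemma pd_congr {n : ℕ} (i : Fin n) {Ω : Set (EuclideanSpace ℝ (Fin n))} (hΩ : IsOpen Ω)
    {f g : EuclideanSpace ℝ (Fin n) → ℝ} (h : ∀ y ∈ Ω, f y = g y) :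
    ∀ y ∈ Ω, pd i f y = pd i g y := by
  intro y hy
  have : f =ᶠ[nhds y] g := Filter.eventually_of_mem (hΩ.mem_nhds hy) h
  simp [pd, this.fderiv_eq]

lemma pd_comm {n : ℕ} (i j : Fin n) {f : EuclideanSpace ℝ (Fin n) → ℝ}
    {x : EuclideanSpace ℝ (Fin n)} (hf : ContDiffAt ℝ (⊤ : ℕ∞) f x) :
    pd i (pd j f) x = pd j (pd i f) x := by
  have hd : DifferentiableAt ℝ (fderiv ℝ f) x :=
    (hf.fderiv_right (m := (⊤ : ℕ∞)) (by exact_mod_cast le_top)).differentiableAt (by simp)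
  have key : ∀ k l : Fin n, pd k (pd l f) x
      = fderiv ℝ (fderiv ℝ f) x (EuclideanSpace.single k 1) (EuclideanSpace.single l 1) := by
    intro k l
    have : fderiv ℝ (pd l f) x = _ :=
      fderiv_clm_apply hd (differentiableAt_const (EuclideanSpace.single l (1 : ℝ)))
    rw [pd, this]
    simp
  rw [key, key]
  exact (hf.isSymmSndFDerivAt (by
    rw [minSmoothness_of_isRCLikeNormedField]
    exact (WithTop.coe_le_coe.2 le_top : ((2 : ℕ∞) : WithTop ℕ∞) ≤ ((⊤ : ℕ∞) : WithTop ℕ∞)))).eq _ _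

lemma norm_gradient_sq {n : ℕ} (u : EuclideanSpace ℝ (Fin n) → ℝ)
    (y : EuclideanSpace ℝ (Fin n)) : ‖gradient u y‖ ^ 2 = ∑ i, pd i u y ^ 2 := by
  rw [EuclideanSpace.norm_sq_eq]
  refine Finset.sum_congr rfl fun i _ => ?_
  have : pd i u y = gradient u y i := by
    rw [pd, ← toDual_gradient, InnerProductSpace.toDual_apply_apply,
      EuclideanSpace.inner_single_right]
    simp
  rw [this, Real.norm_eq_abs, sq_abs]

/-! ### The Bochner–Kato inequality -/

section Bochner

variable {n : ℕ} {w : Fin n → EuclideanSpace ℝ (Fin n) → ℝ} {ε : ℝ}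
  {x : EuclideanSpace ℝ (Fin n)}

lemma sum_sq_add_pos (hε : 0 < ε) (a : Fin n → ℝ) : 0 < ∑ i, a i ^ 2 + ε ^ 2 := by positivity

lemma contDiffAt_sqrt_sum_sq (hε : 0 < ε) (hw : ∀ i, ContDiffAt ℝ (⊤ : ℕ∞) (w i) x) :
    ContDiffAt ℝ (⊤ : ℕ∞) (fun y => Real.sqrt (∑ i, w i y ^ 2 + ε ^ 2)) x :=
  ((ContDiffAt.sum fun i _ => (hw i).pow 2).add contDiffAt_const).sqrt
    (sum_sq_add_pos hε _).ne'

lemma pd_mul (j : Fin n) {f g : EuclideanSpace ℝ (Fin n) → ℝ} (hf : DifferentiableAt ℝ f x)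
    (hg : DifferentiableAt ℝ g x) :
    pd j (fun y => f y * g y) x = f x * pd j g x + pd j f x * g x := by
  simp [pd, fderiv_fun_mul hf hg]; ring

lemma pd_sum (j : Fin n) {f : Fin n → EuclideanSpace ℝ (Fin n) → ℝ}
    (hf : ∀ i, DifferentiableAt ℝ (f i) x) :
    pd j (fun y => ∑ i, f i y) x = ∑ i, pd j (f i) x := by
  simp [pd, fderiv_fun_sum fun i _ => hf i]

lemma pd_sqrt_sum_sq (hε : 0 < ε) (j : Fin n) (hw : ∀ i, DifferentiableAt ℝ (w i) x) :
    Real.sqrt (∑ i, w i x ^ 2 + ε ^ 2) *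
      pd j (fun y => Real.sqrt (∑ i, w i y ^ 2 + ε ^ 2)) x = ∑ i, w i x * pd j (w i) x := by
  have hpos := sum_sq_add_pos hε (fun i => w i x)
  have hd : HasFDerivAt (fun y => ∑ i, w i y ^ 2 + ε ^ 2)
      (∑ i, (2 * w i x) • fderiv ℝ (w i) x) x := by
    refine (HasFDerivAt.fun_sum fun i _ => ?_).add_const _
    simpa using (hw i).hasFDerivAt.pow 2
  rw [pd, (hd.sqrt hpos.ne').fderiv]
  have := (Real.sqrt_pos.2 hpos).ne'
  simp only [_root_.smul_apply, _root_.sum_apply, smul_eq_mul, pd]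
  field_simp
  rw [Finset.mul_sum]
  exact Finset.sum_congr rfl fun i _ => by ring

/-- A formula for `f Δf`, where `f = (∑ wᵢ² + ε²)^{1/2}`, obtained by differentiating
`f ∂ⱼf = ∑ᵢ wᵢ ∂ⱼwᵢ`. -/
lemma lap_sqrt_sum_sq {Ω : Set (EuclideanSpace ℝ (Fin n))} (hΩ : IsOpen Ω) (hx : x ∈ Ω)
    (hε : 0 < ε) (hw : ∀ i, ∀ y ∈ Ω, ContDiffAt ℝ (⊤ : ℕ∞) (w i) y) :
    Real.sqrt (∑ i, w i x ^ 2 + ε ^ 2) * lap (fun y => Real.sqrt (∑ i, w i y ^ 2 + ε ^ 2)) x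
      = ∑ j, (∑ i, pd j (w i) x ^ 2
          - pd j (fun y => Real.sqrt (∑ i, w i y ^ 2 + ε ^ 2)) x ^ 2)
        + ∑ i, w i x * lap (w i) x := by
  set f : EuclideanSpace ℝ (Fin n) → ℝ := fun y => Real.sqrt (∑ i, w i y ^ 2 + ε ^ 2) with hf
  have hfs : ContDiffAt ℝ (⊤ : ℕ∞) f x := contDiffAt_sqrt_sum_sq hε fun i => hw i x hx
  have key : ∀ j, f x * pd j (pd j f) x
      = (∑ i, pd j (w i) x ^ 2 - pd j f x ^ 2) + ∑ i, w i x * pd j (pd j (w i)) x := by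
    intro j
    have h1 := pd_congr j hΩ (f := fun y => f y * pd j f y)
      (g := fun y => ∑ i, w i y * pd j (w i) y)
      (fun y hy => pd_sqrt_sum_sq hε j fun i => (hw i y hy).diffAt_top) x hx
    rw [pd_mul j hfs.diffAt_top (contDiffAt_pd j hfs).diffAt_top,
      pd_sum j fun i => (hw i x hx).diffAt_top.fun_mul (contDiffAt_pd j (hw i x hx)).diffAt_top] at h1
    have h2 : ∀ i, pd j (fun y => w i y * pd j (w i) y) x
        = w i x * pd j (pd j (w i)) x + pd j (w i) x ^ 2 := fun i => by
      rw [pd_mul j (hw i x hx).diffAt_top (contDiffAt_pd j (hw i x hx)).diffAt_top]; ring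
    simp only [h2, Finset.sum_add_distrib] at h1
    linarith
  change f x * lap f x = _
  rw [lap_eq_sum_pd, Finset.mul_sum, Finset.sum_congr rfl fun j _ => key j,
    Finset.sum_add_distrib, Finset.sum_comm (f := fun j i => w i x * pd j (pd j (w i)) x)]
  simp only [lap_eq_sum_pd, Finset.mul_sum]

/-- Kato inequality in the form `f Δf ≥ ∑ wᵢ Δwᵢ` for `f = (∑ wᵢ² + ε²)^{1/2}`. -/
lemma sum_mul_lap_le_sqrt_mul_lap {Ω : Set (EuclideanSpace ℝ (Fin n))} (hΩ : IsOpen Ω)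
    (hx : x ∈ Ω) (hε : 0 < ε) (hw : ∀ i, ∀ y ∈ Ω, ContDiffAt ℝ (⊤ : ℕ∞) (w i) y) :
    ∑ i, w i x * lap (w i) x ≤ Real.sqrt (∑ i, w i x ^ 2 + ε ^ 2) *
      lap (fun y => Real.sqrt (∑ i, w i y ^ 2 + ε ^ 2)) x := by
  rw [lap_sqrt_sum_sq hΩ hx hε hw]
  refine le_add_of_nonneg_left (Finset.sum_nonneg fun j _ => ?_)
  have hpos := sum_sq_add_pos hε (fun i => w i x)
  have h1 := pd_sqrt_sum_sq hε j fun i => (hw i x hx).diffAt_top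
  have h2 := Finset.sum_mul_sq_le_sq_mul_sq Finset.univ (fun i => w i x) (fun i => pd j (w i) x)
  rw [← h1, mul_pow, Real.sq_sqrt hpos.le] at h2
  have h3 : 0 ≤ ∑ i, pd j (w i) x ^ 2 := by positivity
  have h4 : (∑ i, w i x ^ 2) * ∑ i, pd j (w i) x ^ 2
      ≤ (∑ i, w i x ^ 2 + ε ^ 2) * ∑ i, pd j (w i) x ^ 2 :=
    mul_le_mul_of_nonneg_right (by linarith [sq_nonneg ε]) h3
  exact sub_nonneg.2 (le_of_mul_le_mul_left (h2.trans h4) hpos)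

end Bochner

/-- The differentiated equation `Δ(∂ᵢu) = -c φ'(u) ∂ᵢu`. -/
lemma lap_partial_eq {n : ℕ} {Ω : Set (EuclideanSpace ℝ (Fin n))} (hΩ : IsOpen Ω)
    {φ : ℝ → ℝ} (hφ : ContDiff ℝ 1 φ) {c : ℝ} {u : EuclideanSpace ℝ (Fin n) → ℝ}
    (hu : ∀ y ∈ Ω, ContDiffAt ℝ (⊤ : ℕ∞) u y) (heq : ∀ x ∈ Ω, -lap u x = c * φ (u x))
    {x : EuclideanSpace ℝ (Fin n)} (hx : x ∈ Ω) (i : Fin n) :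
    lap (pd i u) x = -(c * deriv φ (u x)) * pd i u x := by
  have h1 : lap (pd i u) x = pd i (lap u) x := by
    have : pd i (lap u) x = ∑ j, pd i (pd j (pd j u)) x :=
      pd_sum i fun j => (contDiffAt_pd j (contDiffAt_pd j (hu x hx))).diffAt_top
    rw [this, lap_eq_sum_pd]
    refine Finset.sum_congr rfl fun j _ => ?_
    rw [pd_comm i j (contDiffAt_pd j (hu x hx))]
    exact pd_congr j hΩ (fun y hy => pd_comm j i (hu y hy)) x hx
  have h2 : pd i (lap u) x = pd i (fun y => -c * φ (u y)) x :=
    pd_congr i hΩ (fun y hy => by linarith [heq y hy]) x hx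
  have h3 : HasFDerivAt (fun y => -c * φ (u y)) (-c • (deriv φ (u x) • fderiv ℝ u x)) x :=
    (((hφ.differentiable (by simp) (u x)).hasDerivAt).comp_hasFDerivAt x
      (hu x hx).diffAt_top.hasFDerivAt).const_mul (-c)
  rw [h1, h2, pd, h3.fderiv]
  simp [pd]
  ring

/-! ### Integration by parts -/

section Parts

variable {n : ℕ} {Ω : Set (EuclideanSpace ℝ (Fin n))}

/-- A function continuous on the open set `Ω` times a test function supported in `Ω` is
integrable, whatever the values of the former outside `Ω`. -/
lemma integrable_mul_test (hΩ : IsOpen Ω) {h ψ : EuclideanSpace ℝ (Fin n) → ℝ}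
    (hh : ContinuousOn h Ω) (hψ : Continuous ψ) (hc : HasCompactSupport ψ)
    (hs : tsupport ψ ⊆ Ω) : Integrable (fun x => h x * ψ x) := by
  refine Continuous.integrable_of_hasCompactSupport
    (continuous_of_tsupport fun x hx => ?_) hc.mul_left
  exact (hh.continuousAt (hΩ.mem_nhds (hs (tsupport_mul_subset_right hx)))).mul hψ.continuousAt

lemma contDiff_pd (i : Fin n) {ψ : EuclideanSpace ℝ (Fin n) → ℝ}
    (hψ : ContDiff ℝ (⊤ : ℕ∞) ψ) : ContDiff ℝ (⊤ : ℕ∞) (pd i ψ) :=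
  contDiff_iff_contDiffAt.2 fun _ => contDiffAt_pd i hψ.contDiffAt

lemma integral_mul_pd (hΩ : IsOpen Ω) {h ψ : EuclideanSpace ℝ (Fin n) → ℝ} (i : Fin n)
    (hh : ∀ x ∈ Ω, ContDiffAt ℝ (⊤ : ℕ∞) h x) (hψ : ContDiff ℝ (⊤ : ℕ∞) ψ)
    (hc : HasCompactSupport ψ) (hs : tsupport ψ ⊆ Ω) :
    ∫ x, h x * pd i ψ x = -∫ x, pd i h x * ψ x := by
  refine integral_mul_fderiv_eq_neg_fderiv_mul_of_integrable ?_ ?_ ?_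
    (fun x hx => (hh x (hs hx)).diffAt_top) (fun x _ => hψ.contDiffAt.diffAt_top)
  · exact integrable_mul_test hΩ (h := pd i h)
      (fun x hx => (contDiffAt_pd i (hh x hx)).continuousAt.continuousWithinAt)
      hψ.continuous hc hs
  · exact integrable_mul_test hΩ (ψ := pd i ψ)
      (fun x hx => (hh x hx).continuousAt.continuousWithinAt)
      (contDiff_pd i hψ).continuous (hc.fderiv_apply ℝ _)
      ((tsupport_fderiv_apply_subset ℝ _).trans hs)
  · exact integrable_mul_test hΩ
      (fun x hx => (hh x hx).continuousAt.continuousWithinAt) hψ.continuous hc hs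

lemma tsupport_lap_subset (ψ : EuclideanSpace ℝ (Fin n) → ℝ) :
    tsupport (lap ψ) ⊆ tsupport ψ := by
  refine closure_minimal (fun x hx => ?_) (isClosed_tsupport _)
  by_contra hn
  refine hx (Finset.sum_eq_zero fun i _ => ?_)
  refine image_eq_zero_of_notMem_tsupport (f := pd i (pd i ψ)) fun h => hn ?_
  exact tsupport_fderiv_apply_subset ℝ _ (tsupport_fderiv_apply_subset ℝ _ h)

lemma contDiffAt_lap {h : EuclideanSpace ℝ (Fin n) → ℝ} {x : EuclideanSpace ℝ (Fin n)}
    (hh : ContDiffAt ℝ (⊤ : ℕ∞) h x) : ContDiffAt ℝ (⊤ : ℕ∞) (lap h) x :=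
  ContDiffAt.sum fun i _ => contDiffAt_pd i (contDiffAt_pd i hh)

lemma integral_mul_lap (hΩ : IsOpen Ω) {h ψ : EuclideanSpace ℝ (Fin n) → ℝ}
    (hh : ∀ x ∈ Ω, ContDiffAt ℝ (⊤ : ℕ∞) h x) (hψ : ContDiff ℝ (⊤ : ℕ∞) ψ)
    (hc : HasCompactSupport ψ) (hs : tsupport ψ ⊆ Ω) :
    ∫ x, h x * lap ψ x = ∫ x, lap h x * ψ x := by
  have hsi : ∀ i, tsupport (pd i ψ) ⊆ Ω := fun i => (tsupport_fderiv_apply_subset ℝ _).trans hs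
  have hci : ∀ i, HasCompactSupport (pd i ψ) := fun i => hc.fderiv_apply ℝ _
  simp only [lap_eq_sum_pd, Finset.mul_sum, Finset.sum_mul]
  rw [integral_finsetSum, integral_finsetSum]
  · refine Finset.sum_congr rfl fun i _ => ?_
    rw [integral_mul_pd hΩ i hh (contDiff_pd i hψ) (hci i) (hsi i),
      integral_mul_pd hΩ i (fun x hx => contDiffAt_pd i (hh x hx)) hψ hc hs, neg_neg]
  · exact fun i _ => integrable_mul_test hΩ
      (fun x hx => (contDiffAt_pd i (contDiffAt_pd i (hh x hx))).continuousAt.continuousWithinAt)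
      hψ.continuous hc hs
  · exact fun i _ => integrable_mul_test hΩ
      (fun x hx => (hh x hx).continuousAt.continuousWithinAt)
      (contDiff_pd i (contDiff_pd i hψ)).continuous ((hci i).fderiv_apply ℝ _)
      ((tsupport_fderiv_apply_subset ℝ _).trans (hsi i))

end Parts

/-! ### Pointwise and distributional subsolution inequalities -/

/-- Bochner method (Euclidean model): if `u` is a bounded smooth solution of
`-Δu = c φ(u)` on `Ω`, then with `c₁ = max(0, sup_{[a,b]} c φ')`, the regularized
gradient length `f_ε = (‖∇u‖² + ε²)^{1/2}` satisfies `-Δf_ε ≤ c₁ f_ε` pointwise, and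
consequently `-Δ‖∇u‖ ≤ c₁ ‖∇u‖` holds distributionally on `Ω`. -/
theorem bochner_method {n : ℕ} (Ω : Set (EuclideanSpace ℝ (Fin n))) (hΩ : IsOpen Ω)
    (φ : ℝ → ℝ) (hφ : ContDiff ℝ 1 φ) (c : ℝ)
    (u : EuclideanSpace ℝ (Fin n) → ℝ) (hu : ContDiffOn ℝ (⊤ : ℕ∞) u Ω)
    (a b : ℝ) (hab : a ≤ b) (hua : ∀ x ∈ Ω, a ≤ u x) (hub : ∀ x ∈ Ω, u x ≤ b)
    (heq : ∀ x ∈ Ω, -lap u x = c * φ (u x))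
    (c₁ : ℝ) (hc₁ : c₁ = max 0 (sSup ((fun t => c * deriv φ t) '' Set.Icc a b))) :
    (∀ ε : ℝ, 0 < ε → ∀ x ∈ Ω,
      -lap (fun y => Real.sqrt (‖gradient u y‖ ^ 2 + ε ^ 2)) x
        ≤ c₁ * Real.sqrt (‖gradient u x‖ ^ 2 + ε ^ 2)) ∧
    (∀ ψ : EuclideanSpace ℝ (Fin n) → ℝ, ContDiff ℝ (⊤ : ℕ∞) ψ → HasCompactSupport ψ →
      tsupport ψ ⊆ Ω → (∀ x, 0 ≤ ψ x) →
      ∫ x in Ω, ‖gradient u x‖ * (-lap ψ x) ≤ c₁ * ∫ x in Ω, ‖gradient u x‖ * ψ x) := by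
  have hus : ∀ x ∈ Ω, ContDiffAt ℝ (⊤ : ℕ∞) u x := fun x hx =>
    hu.contDiffAt (hΩ.mem_nhds hx)
  have hc₁0 : 0 ≤ c₁ := hc₁ ▸ le_max_left _ _
  have hbd : ∀ x ∈ Ω, c * deriv φ (u x) ≤ c₁ := by
    intro x hx
    rw [hc₁]
    refine le_max_of_le_right (le_csSup ?_ ⟨u x, ⟨hua x hx, hub x hx⟩, rfl⟩)
    exact (isCompact_Icc.image
      (continuous_const.mul (hφ.continuous_deriv le_rfl))).bddAbove
  have hfs : ∀ ε : ℝ, 0 < ε → ∀ x ∈ Ω,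
      ContDiffAt ℝ (⊤ : ℕ∞) (fun y => Real.sqrt (‖gradient u y‖ ^ 2 + ε ^ 2)) x := by
    intro ε hε x hx
    simp only [norm_gradient_sq]
    exact contDiffAt_sqrt_sum_sq hε fun i => contDiffAt_pd i (hus x hx)
  have hpt : ∀ ε : ℝ, 0 < ε → ∀ x ∈ Ω,
      -lap (fun y => Real.sqrt (‖gradient u y‖ ^ 2 + ε ^ 2)) x
        ≤ c₁ * Real.sqrt (‖gradient u x‖ ^ 2 + ε ^ 2) := by
    intro ε hε x hx
    simp only [norm_gradient_sq]
    have hpos := sum_sq_add_pos hε (fun i => pd i u x)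
    have h1 := sum_mul_lap_le_sqrt_mul_lap hΩ hx hε
      (w := fun i => pd i u) fun i y hy => contDiffAt_pd i (hus y hy)
    have h2 : ∑ i, pd i u x * lap (pd i u) x
        = -((c * deriv φ (u x)) * ∑ i, pd i u x ^ 2) := by
      rw [Finset.mul_sum, ← Finset.sum_neg_distrib]
      refine Finset.sum_congr rfl fun i _ => ?_
      rw [lap_partial_eq hΩ hφ hus heq hx i]
      ring
    have h3 : 0 ≤ ∑ i, pd i u x ^ 2 := by positivity
    have h4 := mul_le_mul_of_nonneg_right (hbd x hx) h3
    refine le_of_mul_le_mul_left ?_ (Real.sqrt_pos.2 hpos)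
    have h5 := Real.mul_self_sqrt hpos.le
    have h6 := mul_nonneg hc₁0 (sq_nonneg ε)
    have h7 : Real.sqrt (∑ i, pd i u x ^ 2 + ε ^ 2) *
        (c₁ * Real.sqrt (∑ i, pd i u x ^ 2 + ε ^ 2)) = c₁ * (∑ i, pd i u x ^ 2 + ε ^ 2) := by
      rw [mul_left_comm, h5]
    rw [h7]
    linarith
  refine ⟨hpt, ?_⟩
  intro ψ hψ hcs hs hψ0
  set G : EuclideanSpace ℝ (Fin n) → ℝ := fun x => ‖gradient u x‖ with hG
  have hψz : ∀ x, x ∉ Ω → ψ x = 0 := fun x hx =>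
    image_eq_zero_of_notMem_tsupport fun h => hx (hs h)
  have hls : tsupport (lap ψ) ⊆ Ω := (tsupport_lap_subset ψ).trans hs
  have hlc : HasCompactSupport (lap ψ) :=
    hcs.of_isClosed_subset (isClosed_tsupport _) (tsupport_lap_subset ψ)
  have hlcont : Continuous (lap ψ) :=
    continuous_iff_continuousAt.2 fun _ => (contDiffAt_lap hψ.contDiffAt).continuousAt
  have hlz : ∀ x, x ∉ Ω → lap ψ x = 0 := fun x hx =>
    image_eq_zero_of_notMem_tsupport fun h => hx (hls h)
  have hGc : ContinuousOn G Ω := by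
    have hGe : G = fun x => Real.sqrt (∑ i, pd i u x ^ 2) := by
      funext x
      rw [← norm_gradient_sq, Real.sqrt_sq (norm_nonneg _)]
    rw [hGe]
    refine Real.continuous_sqrt.comp_continuousOn (continuousOn_finsetSum _ fun i _ => ?_)
    exact ContinuousOn.pow
      (fun x hx => (contDiffAt_pd i (hus x hx)).continuousAt.continuousWithinAt) 2
  rw [setIntegral_eq_integral_of_forall_compl_eq_zero (fun x hx => by simp [hlz x hx]),
    setIntegral_eq_integral_of_forall_compl_eq_zero (fun x hx => by simp [hψz x hx])]
  have iGl : Integrable fun x => G x * lap ψ x := integrable_mul_test hΩ hGc hlcont hlc hls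
  have iGψ : Integrable fun x => G x * ψ x := integrable_mul_test hΩ hGc hψ.continuous hcs hs
  set A : EuclideanSpace ℝ (Fin n) → ℝ := fun x => -lap ψ x - c₁ * ψ x with hA
  have iA : Integrable A := (hlcont.integrable_of_hasCompactSupport hlc).neg.sub
    ((hψ.continuous.integrable_of_hasCompactSupport hcs).const_mul c₁)
  have expand : ∀ h : EuclideanSpace ℝ (Fin n) → ℝ, Integrable (fun x => h x * lap ψ x) →
      Integrable (fun x => h x * ψ x) → Integrable (fun x => h x * A x) ∧
      ∫ x, h x * A x = -(∫ x, h x * lap ψ x) - c₁ * ∫ x, h x * ψ x := by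
    intro h i1 i2
    have e : (fun x => h x * A x) = fun x => -(h x * lap ψ x) - c₁ * (h x * ψ x) := by
      funext x; simp only [hA]; ring
    rw [e]
    refine ⟨i1.neg.sub (i2.const_mul _), ?_⟩
    rw [integral_sub (f := fun x => -(h x * lap ψ x)) i1.neg (i2.const_mul _), integral_neg,
      integral_const_mul]
  obtain ⟨iGA, eGA⟩ := expand G iGl iGψ
  suffices hmain : ∫ x, G x * A x ≤ 0 by
    simp only [mul_neg, integral_neg]
    linarith
  have hbound : ∀ ε : ℝ, 0 < ε → ∫ x, G x * A x ≤ ε * ∫ x, |A x| := by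
    intro ε hε
    set f : EuclideanSpace ℝ (Fin n) → ℝ := fun y => Real.sqrt (‖gradient u y‖ ^ 2 + ε ^ 2)
      with hf
    have hfc : ContinuousOn f Ω := fun x hx => (hfs ε hε x hx).continuousAt.continuousWithinAt
    have ifl : Integrable fun x => f x * lap ψ x := integrable_mul_test hΩ hfc hlcont hlc hls
    have ifψ : Integrable fun x => f x * ψ x := integrable_mul_test hΩ hfc hψ.continuous hcs hs
    obtain ⟨ifA, efA⟩ := expand f ifl ifψ
    have ilf : Integrable fun x => lap f x * ψ x := integrable_mul_test hΩ
      (fun x hx => (contDiffAt_lap (hfs ε hε x hx)).continuousAt.continuousWithinAt)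
      hψ.continuous hcs hs
    have hneg : ∫ x, f x * A x ≤ 0 := by
      rw [efA, integral_mul_lap hΩ (hfs ε hε) hψ hcs hs, ← integral_neg, ← integral_const_mul,
        sub_nonpos]
      refine integral_mono ilf.neg (ifψ.const_mul c₁) fun x => ?_
      by_cases hx : x ∈ Ω
      · have := mul_le_mul_of_nonneg_right (hpt ε hε x hx) (hψ0 x)
        simp only
        linarith
      · simp [hψz x hx]
    have hle : ∫ x, G x * A x ≤ ∫ x, (f x * A x + ε * |A x|) := by
      refine integral_mono iGA (ifA.add (iA.abs.const_mul ε)) fun x => ?_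
      have hG0 : 0 ≤ G x := norm_nonneg _
      have h1 : G x ≤ f x := Real.le_sqrt_of_sq_le (by simp only [hG]; nlinarith [sq_nonneg ε])
      have h2 : f x ≤ G x + ε := Real.sqrt_le_iff.2 ⟨by positivity, by
        simp only [hG] at hG0 ⊢; nlinarith⟩
      have h3 : (G x - f x) * A x ≤ ε * |A x| := by
        refine (le_abs_self _).trans ?_
        rw [abs_mul]
        exact mul_le_mul_of_nonneg_right (abs_le.2 ⟨by linarith, by linarith⟩) (abs_nonneg _)
      simp only
      linarith
    rw [integral_add ifA (iA.abs.const_mul ε), integral_const_mul] at hle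
    linarith
  refine le_of_forall_pos_le_add fun δ hδ => ?_
  have hI : 0 ≤ ∫ x, |A x| := integral_nonneg fun x => abs_nonneg _
  refine (hbound (δ / ((∫ x, |A x|) + 1)) (by positivity)).trans ?_
  rw [zero_add, div_mul_eq_mul_div, div_le_iff₀ (by positivity)]
  nlinarith
end
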